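/- Let B be a real Banach space and I a finite index set. Let (V_i)_{i∈I} be an independent family of closed linear subspaces of B and let V = Σ_{i∈I} V_i be their (internal, direct) sum. Let (W_i)_{i∈I} be an independent family of closed linear subspaces of the continuous dual B* with W = Σ_{i∈I} W_i, and assume W_i ⊥ V_j for all i ≠ j, i.e. f(v) = 0 whenever f ∈ W_i and v ∈ V_j with i ≠ j. Then V ∩ W^⊥ = Σ_{i∈I} (V_i ∩ W_i^⊥) = Σ_{i∈I} (V_i ∩ W^⊥); moreover the families (V_i ∩ W_i^⊥)_{i∈I} and (V_i ∩ W^⊥)_{i∈I} of subspaces are again independent, so these sums are direct. -/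

import Mathlib

/-- A (finite) family of subspaces is *independent* if whenever `∑ i, u i = 0`
with `u i ∈ U i` for all `i`, then each `u i = 0`. -/
def SubmoduleIndepFamily {B : Type*} [AddCommGroup B] [Module ℝ B]
    {I : Type*} [Fintype I] (U : I → Submodule ℝ B) : Prop :=
  ∀ u : I → B, (∀ i, u i ∈ U i) → (∑ i, u i) = 0 → ∀ i, u i = 0

/-- The pre-annihilator `S^⊥ = {x ∈ B : f x = 0 for all f ∈ S}` of a subspace `S` of the
topological dual of `B`. -/
def preAnnihilator {B : Type*} [NormedAddCommGroup B] [NormedSpace ℝ B]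
    (S : Submodule ℝ (B →L[ℝ] ℝ)) : Submodule ℝ B where
  carrier := {x : B | ∀ f ∈ S, f x = 0}
  add_mem' := by
    intro a b ha hb f hf
    rw [map_add, ha f hf, hb f hf, add_zero]
  zero_mem' := by
    intro f hf
    exact map_zero f
  smul_mem' := by
    intro c a ha f hf
    rw [map_smul, ha f hf, smul_zero]

theorem aux_mem_sum {B : Type*} [AddCommGroup B] [Module ℝ B]
    {I : Type*} (s : Finset I) (U : I → Submodule ℝ B) (x : B) :
    x ∈ ∑ i ∈ s, U i ↔ ∃ u : I → B, (∀ i, u i ∈ U i) ∧ ∑ i ∈ s, u i = x := by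
  classical
  induction s using Finset.induction_on generalizing x with
  | empty =>
    simp only [Finset.sum_empty]
    constructor
    · intro h
      exact ⟨fun _ => 0, fun i => zero_mem _, ((Submodule.mem_bot ℝ).1 h).symm⟩
    · rintro ⟨_, _, h⟩
      exact (Submodule.mem_bot ℝ).2 h.symm
  | insert a s ha ih =>
    rw [Finset.sum_insert ha, Submodule.add_eq_sup, Submodule.mem_sup]
    constructor
    · rintro ⟨y, hy, z, hz, rfl⟩
      obtain ⟨u, hu, rfl⟩ := (ih z).1 hz
      refine ⟨Function.update u a y, fun i => ?_, ?_⟩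
      · by_cases h : i = a
        · subst h; simpa using hy
        · simpa [h] using hu i
      · rw [Finset.sum_insert ha, Function.update_self]
        congr 1
        refine Finset.sum_congr rfl fun i hi => ?_
        rw [Function.update_of_ne]
        rintro rfl
        exact ha hi
    · rintro ⟨u, hu, rfl⟩
      exact ⟨u a, hu a, _, (ih _).2 ⟨u, hu, rfl⟩, (Finset.sum_insert ha).symm⟩

/-- Lemma `lem:ortho` of the paper: if `(V i)` is an independent family of closed subspaces
of a Banach space `B`, `(W i)` an independent family of closed subspaces of the dual `B*`
with `W i ⊥ V j` for `i ≠ j`, then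
`(∑ V i) ∩ (∑ W i)^⊥ = ∑ (V i ∩ (W i)^⊥) = ∑ (V i ∩ (∑ W j)^⊥)`,
and the families `(V i ∩ (W i)^⊥)` and `(V i ∩ (∑ W j)^⊥)` are again independent. -/
theorem stmt0 {B : Type*} [NormedAddCommGroup B] [NormedSpace ℝ B] [CompleteSpace B]
    {I : Type*} [Fintype I]
    (V : I → Submodule ℝ B) (hVclosed : ∀ i, IsClosed (V i : Set B))
    (hVindep : SubmoduleIndepFamily V)
    (W : I → Submodule ℝ (B →L[ℝ] ℝ))
    (hWclosed : ∀ i, IsClosed (W i : Set (B →L[ℝ] ℝ)))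
    (hWindep : SubmoduleIndepFamily W)
    (hperp : ∀ i j, i ≠ j → ∀ f ∈ W i, ∀ v ∈ V j, f v = 0) :
    ((∑ i, V i) ⊓ preAnnihilator (∑ i, W i) = ∑ i, (V i ⊓ preAnnihilator (W i))) ∧
    ((∑ i, V i) ⊓ preAnnihilator (∑ i, W i)
        = ∑ i, (V i ⊓ preAnnihilator (∑ j, W j))) ∧
    SubmoduleIndepFamily (fun i => V i ⊓ preAnnihilator (W i)) ∧
    SubmoduleIndepFamily (fun i => V i ⊓ preAnnihilator (∑ j, W j)) := by
  classical
  have hle : ∀ i, W i ≤ ∑ j, W j := fun i f hf => by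
    refine (aux_mem_sum _ _ _).2 ⟨Pi.single i f, fun j => ?_, by simp⟩
    by_cases h : j = i
    · subst h; simpa using hf
    · simp [h]
  have key : ∀ i, V i ⊓ preAnnihilator (W i) = V i ⊓ preAnnihilator (∑ j, W j) := by
    intro i
    ext x
    constructor
    · rintro ⟨hx, hw⟩
      refine ⟨hx, fun f hf => ?_⟩
      obtain ⟨g, hg, rfl⟩ := (aux_mem_sum _ _ _).1 hf
      rw [ContinuousLinearMap.sum_apply]
      refine Finset.sum_eq_zero fun j _ => ?_
      by_cases h : j = i
      · subst h; exact hw _ (hg j)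
      · exact hperp j i h _ (hg j) _ hx
    · rintro ⟨hx, hw⟩
      exact ⟨hx, fun f hf => hw f (hle i hf)⟩
  have main : (∑ i, V i) ⊓ preAnnihilator (∑ i, W i)
      = ∑ i, (V i ⊓ preAnnihilator (W i)) := by
    ext x
    constructor
    · rintro ⟨hx, hw⟩
      obtain ⟨u, hu, rfl⟩ := (aux_mem_sum _ _ _).1 hx
      refine (aux_mem_sum _ _ _).2 ⟨u, fun i => ⟨hu i, fun f hf => ?_⟩, rfl⟩
      have h := hw f (hle i hf)
      rw [map_sum, Finset.sum_eq_single i] at h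
      · exact h
      · intro j _ hj
        exact hperp i j (Ne.symm hj) f hf _ (hu j)
      · intro h; exact absurd (Finset.mem_univ i) h
    · intro hx
      obtain ⟨u, hu, rfl⟩ := (aux_mem_sum _ _ _).1 hx
      refine ⟨(aux_mem_sum _ _ _).2 ⟨u, fun i => (hu i).1, rfl⟩, ?_⟩
      refine Submodule.sum_mem _ fun i _ => ?_
      have h := hu i
      rw [key i] at h
      exact h.2
  refine ⟨main, ?_, fun u hu => hVindep u fun i => (hu i).1,
    fun u hu => hVindep u fun i => (hu i).1⟩
  rw [main]
  exact Finset.sum_congr rfl fun i _ => key i
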